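/- Let C ⊂ X be a nonempty convex σ(X, X*)-closed set. Then the recession cone satisfies C^∞ = ⋂_{Y ∈ dom(σ_C)} {X ∈ X : E[XY] ≤ 0}. If in addition C is law invariant, then C^∞ = ⋂_{Y ∈ dom(σ_C)} {X ∈ X : ∫_0^1 q_X(s)q_Y(s) ds ≤ 0}; in particular, C^∞ is itself law invariant. -/

import Mathlib

/-!
The first representation is a Hahn–Banach argument. If `X` is a recession direction and `U ∈ C`,
then `U + nX ∈ C` for all `n`, so `E[UY] + n E[XY]` stays below `σ_C(Y)` and `E[XY] ≤ 0`.
Conversely, if `X + U ∉ C`, some `Y ∈ 𝒳*` strictly separates `X + U` from `C`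
(`exists_separating`); then `Y ∈ dom σ_C` and `E[XY] > 0`.

For law-invariant `C` the point is that `∫ q_X q_Y` is the maximum of `E[XY']` over all `Y'`
distributed as `Y` (`IsAtomless.quantile_coupling`). The upper bound is the Hardy–Littlewood
inequality (`hardy_littlewood`). The maximum is attained because on an atomless space
`X = q_X(U)` almost surely for a uniform `U` (`IsAtomless.exists_uniform_quantile`), and
`Y' = q_Y(U)` then has the law of `Y`. This also shows that `q_X q_Y` is integrable, since `𝒳*` is
law invariant. By the same fact `σ_C`, hence `dom σ_C`, is law invariant
(`suppFn_le_of_sameLaw`), so the conditions `E[XY] ≤ 0` and `∫ q_X q_Y ≤ 0`, `Y ∈ dom σ_C`, are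
equivalent; the latter depends only on the law of `X`.

The uniform `U` is the rank of a point in the lexicographic order of `(X, V)`, where `V` has
atomless law (`IsAtomless.exists_continuous`); uniformity of such ranks is `measure_rank_le`.
-/

open MeasureTheory Set List
open scoped ENNReal NNReal

noncomputable section

namespace Collapse

variable {Ω : Type*} [MeasurableSpace Ω]

/-- A measure is atomless (nonatomic) if every set of positive measure contains a
measurable subset of strictly smaller positive measure. -/
def IsAtomless (P : Measure Ω) : Prop :=
  ∀ A : Set Ω, MeasurableSet A → 0 < P A →
    ∃ B : Set Ω, MeasurableSet B ∧ B ⊆ A ∧ 0 < P B ∧ P B < P A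

/-- `X` and `Y` have the same law under `P`. -/
def SameLaw (P : Measure Ω) (X Y : Ω → ℝ) : Prop :=
  Measure.map X P = Measure.map Y P

/-- `X` is not `P`-a.s. equal to a constant. -/
def Nonconstant (P : Measure Ω) (X : Ω → ℝ) : Prop :=
  ∀ c : ℝ, ¬ X =ᵐ[P] (fun _ => c)

/-- `X` and `Y` are comonotone:
`P(X ≤ x, Y ≤ y) = min (P(X ≤ x)) (P(Y ≤ y))` for all `x y`. -/
def Comonotone (P : Measure Ω) (X Y : Ω → ℝ) : Prop :=
  ∀ x y : ℝ,
    P ({ω | X ω ≤ x} ∩ {ω | Y ω ≤ y}) = min (P {ω | X ω ≤ x}) (P {ω | Y ω ≤ y})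

/-- `X` and `Y` are antimonotone:
`P(X ≤ x, Y ≤ y) = max (P(X ≤ x) + P(Y ≤ y) - 1) 0` for all `x y`
(in `ℝ≥0∞`, truncated subtraction realises the `max` with `0`). -/
def Antimonotone (P : Measure Ω) (X Y : Ω → ℝ) : Prop :=
  ∀ x y : ℝ,
    P ({ω | X ω ≤ x} ∩ {ω | Y ω ≤ y}) = (P {ω | X ω ≤ x} + P {ω | Y ω ≤ y}) - 1

/-- `q` is a quantile function of `X` under `P`. -/
def IsQuantile (P : Measure Ω) (X : Ω → ℝ) (q : ℝ → ℝ) : Prop :=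
  ∀ s ∈ Set.Ioo (0:ℝ) 1,
    sInf {x : ℝ | s ≤ (P {ω | X ω ≤ x}).toReal} ≤ q s ∧
    q s ≤ sInf {x : ℝ | s < (P {ω | X ω ≤ x}).toReal}

/-- `X` belongs to `L^∞(P)`: measurable and essentially bounded. -/
def MemLinf (P : Measure Ω) (X : Ω → ℝ) : Prop :=
  Measurable X ∧ ∃ M : ℝ, ∀ᵐ ω ∂P, |X ω| ≤ M

/-- A pair `(𝒳, 𝒳*)` of law-invariant vector subspaces of `L¹(P)` containing `L^∞(P)`
such that `X * Y ∈ L¹(P)` for all `X ∈ 𝒳`, `Y ∈ 𝒳*` (Assumption 2.1). -/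
structure PairedSpaces (P : Measure Ω) where
  carrier : Set (Ω → ℝ)
  dual : Set (Ω → ℝ)
  meas_carrier : ∀ X ∈ carrier, Measurable X
  meas_dual : ∀ Y ∈ dual, Measurable Y
  int_carrier : ∀ X ∈ carrier, Integrable X P
  int_dual : ∀ Y ∈ dual, Integrable Y P
  smul_carrier : ∀ X ∈ carrier, ∀ c : ℝ, (fun ω => c * X ω) ∈ carrier
  add_carrier : ∀ X ∈ carrier, ∀ X' ∈ carrier, (fun ω => X ω + X' ω) ∈ carrier
  smul_dual : ∀ Y ∈ dual, ∀ c : ℝ, (fun ω => c * Y ω) ∈ dual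
  add_dual : ∀ Y ∈ dual, ∀ Y' ∈ dual, (fun ω => Y ω + Y' ω) ∈ dual
  linf_carrier : ∀ X : Ω → ℝ, MemLinf P X → X ∈ carrier
  linf_dual : ∀ Y : Ω → ℝ, MemLinf P Y → Y ∈ dual
  lawinv_carrier : ∀ X ∈ carrier, ∀ X' : Ω → ℝ, Measurable X' → SameLaw P X' X → X' ∈ carrier
  lawinv_dual : ∀ Y ∈ dual, ∀ Y' : Ω → ℝ, Measurable Y' → SameLaw P Y' Y → Y' ∈ dual
  mul_int : ∀ X ∈ carrier, ∀ Y ∈ dual, Integrable (fun ω => X ω * Y ω) P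

/-- A subset `C` of `𝒳` is closed in the weak topology `σ(𝒳, 𝒳*)`, i.e. the topology
on `𝒳` induced by the linear functionals `X ↦ E[X Y]`, `Y ∈ 𝒳*`. -/
def WeakClosed (P : Measure Ω) (pr : PairedSpaces P) (C : Set (Ω → ℝ)) : Prop :=
  @IsClosed ↥pr.carrier
    (TopologicalSpace.induced
      (fun X : ↥pr.carrier => (fun Y : ↥pr.dual => ∫ ω, (X : Ω → ℝ) ω * (Y : Ω → ℝ) ω ∂P))
      Pi.topologicalSpace)
    {X : ↥pr.carrier | (X : Ω → ℝ) ∈ C}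

/-- `φ` is `σ(𝒳, 𝒳*)`-lower semicontinuous: every sublevel set is `σ(𝒳, 𝒳*)`-closed. -/
def WeakLSC (P : Measure Ω) (pr : PairedSpaces P) (φ : (Ω → ℝ) → EReal) : Prop :=
  ∀ m : ℝ, WeakClosed P pr {X | X ∈ pr.carrier ∧ φ X ≤ (m : EReal)}

/-- The (upper) support functional `σ_C(Y) = sup_{X ∈ C} E[XY]`. -/
def suppFn (P : Measure Ω) (C : Set (Ω → ℝ)) (Y : Ω → ℝ) : EReal :=
  ⨆ X ∈ C, ((∫ ω, X ω * Y ω ∂P : ℝ) : EReal)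

/-- The conjugate functional `φ*(Y) = sup_{X ∈ 𝒳} (E[XY] - φ(X))`. -/
def conj (P : Measure Ω) (𝒳 : Set (Ω → ℝ)) (φ : (Ω → ℝ) → EReal) (Y : Ω → ℝ) : EReal :=
  ⨆ X ∈ 𝒳, (((∫ ω, X ω * Y ω ∂P : ℝ) : EReal) - φ X)

/-- The recession cone `C^∞ = {X ∈ 𝒳 : {X} + C ⊆ C}`. -/
def recCone (𝒳 C : Set (Ω → ℝ)) : Set (Ω → ℝ) :=
  {X | X ∈ 𝒳 ∧ ∀ U ∈ C, (fun ω => X ω + U ω) ∈ C}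

/-- A functional on `𝒳` is law invariant. -/
def LawInvariantFn (P : Measure Ω) (𝒳 : Set (Ω → ℝ)) (φ : (Ω → ℝ) → EReal) : Prop :=
  ∀ X ∈ 𝒳, ∀ Y ∈ 𝒳, SameLaw P X Y → φ X = φ Y

/-- A set of random variables is law invariant. -/
def LawInvariantSet (P : Measure Ω) (C : Set (Ω → ℝ)) : Prop :=
  ∀ X ∈ C, ∀ Y : Ω → ℝ, Measurable Y → SameLaw P Y X → Y ∈ C

/-- A functional on `𝒳` is expectation invariant. -/
def ExpectationInvariantFn (P : Measure Ω) (𝒳 : Set (Ω → ℝ)) (φ : (Ω → ℝ) → EReal) : Prop :=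
  ∀ X ∈ 𝒳, ∀ Y ∈ 𝒳, (∫ ω, X ω ∂P) = (∫ ω, Y ω ∂P) → φ X = φ Y

/-- Convexity of a functional `φ : 𝒳 → (-∞, ∞]`. -/
def ConvexFn (𝒳 : Set (Ω → ℝ)) (φ : (Ω → ℝ) → EReal) : Prop :=
  ∀ X ∈ 𝒳, ∀ Y ∈ 𝒳, ∀ l : ℝ, l ∈ Set.Icc (0:ℝ) 1 →
    φ (fun ω => l * X ω + (1 - l) * Y ω) ≤ (l : EReal) * φ X + ((1 - l : ℝ) : EReal) * φ Y

/-- Quasiconvexity of a functional `φ : 𝒳 → (-∞, ∞]`. -/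
def QuasiconvexFn (𝒳 : Set (Ω → ℝ)) (φ : (Ω → ℝ) → EReal) : Prop :=
  ∀ X ∈ 𝒳, ∀ Y ∈ 𝒳, ∀ l : ℝ, l ∈ Set.Icc (0:ℝ) 1 →
    φ (fun ω => l * X ω + (1 - l) * Y ω) ≤ max (φ X) (φ Y)

/-- Convexity of a set of random variables. -/
def ConvexSet (C : Set (Ω → ℝ)) : Prop :=
  ∀ X ∈ C, ∀ Y ∈ C, ∀ l : ℝ, l ∈ Set.Icc (0:ℝ) 1 →
    (fun ω => l * X ω + (1 - l) * Y ω) ∈ C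

/-- The expectation of `Z` as an extended real number,
`E[Z] = ∫ Z⁺ dP - ∫ Z⁻ dP` computed in `EReal`. -/
def eExp (P : Measure Ω) (Z : Ω → ℝ) : EReal :=
  ((∫⁻ ω, ENNReal.ofReal (Z ω) ∂P : ℝ≥0∞) : EReal) -
    ((∫⁻ ω, ENNReal.ofReal (-(Z ω)) ∂P : ℝ≥0∞) : EReal)

/-- `X` dominates `Y` in the increasing convex (second-order stochastic dominance) sense:
`E[f(X)] ≥ E[f(Y)]` for every nondecreasing convex `f : ℝ → ℝ`. -/
def SSDdom (P : Measure Ω) (X Y : Ω → ℝ) : Prop :=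
  ∀ f : ℝ → ℝ, Monotone f → ConvexOn ℝ Set.univ f →
    eExp P (fun ω => f (Y ω)) ≤ eExp P (fun ω => f (X ω))

/-- A consistent risk measure on `𝒳`: a proper, cash-additive, normalised functional
that is consistent with second-order stochastic dominance. -/
def IsConsistentRM (P : Measure Ω) (𝒳 : Set (Ω → ℝ)) (φ : (Ω → ℝ) → EReal) : Prop :=
  (∀ X ∈ 𝒳, φ X ≠ (⊥ : EReal)) ∧
  (∃ X ∈ 𝒳, φ X ≠ (⊤ : EReal)) ∧
  (∀ X ∈ 𝒳, ∀ m : ℝ, φ (fun ω => X ω + m) = φ X + (m : EReal)) ∧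
  (∀ X ∈ 𝒳, ∀ Y ∈ 𝒳, SSDdom P X Y → φ Y ≤ φ X) ∧
  φ (fun _ => (0:ℝ)) = (0 : EReal)

/-- A capacity on `(Ω, F)`. -/
structure Capacity (Ω : Type*) [MeasurableSpace Ω] where
  toFun : Set Ω → ℝ
  empty' : toFun ∅ = 0
  univ' : toFun Set.univ = 1
  mono' : ∀ ⦃A B : Set Ω⦄, MeasurableSet A → MeasurableSet B → A ⊆ B → toFun A ≤ toFun B
  nonneg' : ∀ A : Set Ω, MeasurableSet A → 0 ≤ toFun A
  le_one' : ∀ A : Set Ω, MeasurableSet A → toFun A ≤ 1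

/-- A capacity is coherent if it is the upper envelope of a family of probability measures. -/
def Capacity.Coherent (ν : Capacity Ω) : Prop :=
  ∃ Q : Set (Measure Ω), Q.Nonempty ∧ (∀ m ∈ Q, IsProbabilityMeasure m) ∧
    ∀ A : Set Ω, MeasurableSet A → ν.toFun A = ⨆ m ∈ Q, (m A).toReal

/-- A capacity is law invariant (with respect to `P`). -/
def Capacity.LawInvariant (P : Measure Ω) (μ : Capacity Ω) : Prop :=
  ∀ A B : Set Ω, MeasurableSet A → MeasurableSet B → P A = P B → μ.toFun A = μ.toFun B

/-- `μ` is the Jaffray-Philippe capacity represented by the pair `(ν, α)`: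
`μ = α ν + (1 - α) ν̄` with `ν` coherent and `α ∈ [0,1]`,
where `ν̄(A) = 1 - ν(Aᶜ)` is the dual capacity. -/
def IsJPRep (μ ν : Capacity Ω) (α : ℝ) : Prop :=
  ν.Coherent ∧ α ∈ Set.Icc (0:ℝ) 1 ∧
    ∀ A : Set Ω, MeasurableSet A → μ.toFun A = α * ν.toFun A + (1 - α) * (1 - ν.toFun Aᶜ)

/-- The Choquet integral `E_μ[X] = ∫_{-∞}^0 (μ(X > s) - 1) ds + ∫_0^∞ μ(X > s) ds`. -/
def choquet (μ : Capacity Ω) (X : Ω → ℝ) : ℝ :=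
  (∫ s in Set.Iio (0:ℝ), (μ.toFun {ω | s < X ω} - 1)) +
    ∫ s in Set.Ici (0:ℝ), μ.toFun {ω | s < X ω}

/-- `X` is an optimal solution of: maximise `φ` over `C` subject to `E[D X] = p`. -/
def IsOptimal (P : Measure Ω) (φ : (Ω → ℝ) → EReal) (C : Set (Ω → ℝ)) (D : Ω → ℝ)
    (p : ℝ) (X : Ω → ℝ) : Prop :=
  X ∈ C ∧ (∫ ω, D ω * X ω ∂P) = p ∧
    ∀ X' ∈ C, (∫ ω, D ω * X' ω ∂P) = p → φ X' ≤ φ X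

/-- A set of random variables is increasing. -/
def IncreasingSet (C : Set (Ω → ℝ)) : Prop :=
  ∀ X ∈ C, ∀ m : ℝ, 0 ≤ m → (fun ω => X ω + m) ∈ C

/-- `φ` is weakly increasing: `φ(X + m) ≥ φ(X)` for `m ≥ 0`. -/
def WeaklyIncreasingFn (𝒳 : Set (Ω → ℝ)) (φ : (Ω → ℝ) → EReal) : Prop :=
  ∀ X ∈ 𝒳, ∀ m : ℝ, 0 ≤ m → φ X ≤ φ (fun ω => X ω + m)

/-- `φ` is increasing: `φ(X + m) > φ(X)` whenever `φ(X) ∈ ℝ` and `m > 0`. -/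
def IncreasingFn (𝒳 : Set (Ω → ℝ)) (φ : (Ω → ℝ) → EReal) : Prop :=
  ∀ X ∈ 𝒳, (φ X ≠ (⊤ : EReal) ∧ φ X ≠ (⊥ : EReal)) → ∀ m : ℝ, 0 < m →
    φ X < φ (fun ω => X ω + m)


/-! ### Dual representation without law invariance -/

/-- The space `𝒳` as a submodule of the real functions on `Ω`. -/
def carrierSub {P : Measure Ω} (pr : PairedSpaces P) : Submodule ℝ (Ω → ℝ) where
  carrier := pr.carrier
  add_mem' := fun {a b} ha hb => pr.add_carrier a ha b hb
  zero_mem' := pr.linf_carrier _ ⟨measurable_const, 0, by simp⟩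
  smul_mem' := fun c x hx => pr.smul_carrier x hx c

/-- The space `𝒳*` as a submodule of the real functions on `Ω`. -/
def dualSub {P : Measure Ω} (pr : PairedSpaces P) : Submodule ℝ (Ω → ℝ) where
  carrier := pr.dual
  add_mem' := fun {a b} ha hb => pr.add_dual a ha b hb
  zero_mem' := pr.linf_dual _ ⟨measurable_const, 0, by simp⟩
  smul_mem' := fun c x hx => pr.smul_dual x hx c

/-- The pairing `(X, Y) ↦ E[XY]` as a bilinear form on `𝒳 × 𝒳*`. -/
def pairing {P : Measure Ω} (pr : PairedSpaces P) :
    carrierSub pr →ₗ[ℝ] dualSub pr →ₗ[ℝ] ℝ :=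
  LinearMap.mk₂ ℝ (fun X Y => ∫ ω, (X : Ω → ℝ) ω * (Y : Ω → ℝ) ω ∂P)
    (fun X X' Y => by
      rw [← integral_add (pr.mul_int _ X.2 _ Y.2) (pr.mul_int _ X'.2 _ Y.2)]
      simp [add_mul])
    (fun c X Y => by
      rw [smul_eq_mul, ← integral_const_mul]
      simp [mul_assoc])
    (fun X Y Y' => by
      rw [← integral_add (pr.mul_int _ X.2 _ Y.2) (pr.mul_int _ X.2 _ Y'.2)]
      simp [mul_add])
    (fun c X Y => by
      rw [smul_eq_mul, ← integral_const_mul]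
      simp [mul_left_comm])

/-- Hahn–Banach for `σ(𝒳, 𝒳*)`: a point outside a closed convex set is strictly separated
from it by some `Y ∈ 𝒳*`. -/
lemma exists_separating {P : Measure Ω} (pr : PairedSpaces P) {C : Set (Ω → ℝ)}
    (hCconv : ConvexSet C) (hCcl : WeakClosed P pr C) {Z : Ω → ℝ} (hZ : Z ∈ pr.carrier)
    (hZC : Z ∉ C) :
    ∃ Y ∈ pr.dual, ∃ u : ℝ, (∀ W ∈ C, W ∈ pr.carrier → ∫ ω, W ω * Y ω ∂P < u) ∧
      u < ∫ ω, Z ω * Y ω ∂P := by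
  let S : Set (WeakBilin (pairing pr)) := {X : carrierSub pr | (X : Ω → ℝ) ∈ C}
  have hS : IsClosed S := hCcl
  have hSc : Convex ℝ S := by
    intro X hX Y hY a b ha hb hab
    have h := hCconv _ hX _ hY a ⟨ha, by linarith⟩
    have hb' : 1 - a = b := by linarith
    rw [hb'] at h
    exact h
  let z : WeakBilin (pairing pr) := (⟨Z, hZ⟩ : carrierSub pr)
  have hz : z ∉ S := hZC
  obtain ⟨f, u, h1, h2⟩ := geometric_hahn_banach_closed_point hSc hS hz
  obtain ⟨Y, rfl⟩ := LinearMap.dualEmbedding_surjective (pairing pr) f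
  exact ⟨Y.1, Y.2, u, fun W hW hWc => h1 (⟨W, hWc⟩ : carrierSub pr) hW, h2⟩

lemma recCone_eq {P : Measure Ω} (pr : PairedSpaces P) {C : Set (Ω → ℝ)}
    (hCsub : C ⊆ pr.carrier) (hCne : C.Nonempty) (hCconv : ConvexSet C)
    (hCcl : WeakClosed P pr C) :
    recCone pr.carrier C =
      {X | X ∈ pr.carrier ∧ ∀ Y ∈ pr.dual,
        (∃ r : ℝ, suppFn P C Y = (r : EReal)) → (∫ ω, X ω * Y ω ∂P) ≤ 0} := by
  ext X
  constructor
  · rintro ⟨hX, hrec⟩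
    refine ⟨hX, fun Y hY ⟨r, hr⟩ => ?_⟩
    obtain ⟨U, hU⟩ := hCne
    have hle : ∀ W ∈ C, ∫ ω, W ω * Y ω ∂P ≤ r := by
      intro W hW
      have : ((∫ ω, W ω * Y ω ∂P : ℝ) : EReal) ≤ suppFn P C Y :=
        le_iSup₂ (f := fun W (_ : W ∈ C) => ((∫ ω, W ω * Y ω ∂P : ℝ) : EReal)) W hW
      rw [hr] at this
      exact_mod_cast this
    -- iterating the recession property, `U + nX ∈ C` for all `n`
    have hmem : ∀ n : ℕ, (fun ω => n * X ω + U ω) ∈ C := by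
      intro n
      induction n with
      | zero => simpa using hU
      | succ n ih =>
        have := hrec _ ih
        convert this using 2
        push_cast
        ring
    have hbd : ∀ n : ℕ, n * (∫ ω, X ω * Y ω ∂P) + ∫ ω, U ω * Y ω ∂P ≤ r := by
      intro n
      have h := hle _ (hmem n)
      rwa [show (fun ω => (n * X ω + U ω) * Y ω) = fun ω => n * (X ω * Y ω) + U ω * Y ω by
        ext ω; ring, integral_add ((pr.mul_int X hX Y hY).const_mul _)
        (pr.mul_int U (hCsub hU) Y hY), integral_const_mul] at h
    by_contra! hpos
    obtain ⟨n, hn⟩ := exists_nat_gt ((r - ∫ ω, U ω * Y ω ∂P) / ∫ ω, X ω * Y ω ∂P)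
    rw [div_lt_iff₀ hpos] at hn
    linarith [hbd n]
  · rintro ⟨hX, h⟩
    refine ⟨hX, fun U hU => ?_⟩
    by_contra hnot
    have hUc := hCsub hU
    obtain ⟨Y, hY, u, h1, h2⟩ :=
      exists_separating pr hCconv hCcl (pr.add_carrier X hX U hUc) hnot
    have hfin : ∃ r : ℝ, suppFn P C Y = (r : EReal) := by
      have hub : suppFn P C Y ≤ (u : EReal) :=
        iSup₂_le fun W hW => by exact_mod_cast (h1 W hW (hCsub hW)).le
      have hlb : ((∫ ω, U ω * Y ω ∂P : ℝ) : EReal) ≤ suppFn P C Y :=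
        le_iSup₂ (f := fun W (_ : W ∈ C) => ((∫ ω, W ω * Y ω ∂P : ℝ) : EReal)) U hU
      refine ⟨(suppFn P C Y).toReal, (EReal.coe_toReal ?_ ?_).symm⟩
      · exact ne_top_of_le_ne_top (EReal.coe_ne_top u) hub
      · exact ne_bot_of_le_ne_bot (EReal.coe_ne_bot _) hlb
    have h3 := h Y hY hfin
    have h4 := h1 U hU hUc
    rw [show (fun ω => (X ω + U ω) * Y ω) = fun ω => X ω * Y ω + U ω * Y ω by
        ext ω; ring, integral_add (pr.mul_int X hX Y hY) (pr.mul_int U hUc Y hY)] at h2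
    linarith

/-! ### Quantile functions -/

/-- Lebesgue measure on `(0, 1)`. -/
abbrev unif : Measure ℝ := volume.restrict (Set.Ioo (0:ℝ) 1)

instance : IsProbabilityMeasure unif := ⟨by simp [unif]⟩

lemma cdf_map_eq {P : Measure Ω} [IsProbabilityMeasure P] {X : Ω → ℝ} (hX : Measurable X)
    (x : ℝ) : (P {ω | X ω ≤ x}).toReal = ProbabilityTheory.cdf (P.map X) x := by
  have := Measure.isProbabilityMeasure_map (μ := P) hX.aemeasurable
  rw [ProbabilityTheory.cdf_eq_real, measureReal_def, Measure.map_apply hX measurableSet_Iic]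
  rfl

section
variable {P : Measure Ω} [IsProbabilityMeasure P] {X : Ω → ℝ}

lemma nonempty_lt_cdf (hX : Measurable X) {s : ℝ} (hs : s ∈ Set.Ioo (0:ℝ) 1) :
    {x : ℝ | s < (P {ω | X ω ≤ x}).toReal}.Nonempty := by
  simp only [cdf_map_eq hX]
  exact ((ProbabilityTheory.tendsto_cdf_atTop (P.map X)).eventually_const_lt hs.2).exists

lemma nonempty_le_cdf (hX : Measurable X) {s : ℝ} (hs : s ∈ Set.Ioo (0:ℝ) 1) :
    {x : ℝ | s ≤ (P {ω | X ω ≤ x}).toReal}.Nonempty :=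
  by
  obtain ⟨x, hx⟩ := nonempty_lt_cdf (P := P) hX hs
  exact ⟨x, le_of_lt (show s < _ from hx)⟩

lemma bddBelow_le_cdf (hX : Measurable X) {s : ℝ} (hs : s ∈ Set.Ioo (0:ℝ) 1) :
    BddBelow {x : ℝ | s ≤ (P {ω | X ω ≤ x}).toReal} := by
  simp only [cdf_map_eq hX]
  obtain ⟨b, hb⟩ :=
    ((ProbabilityTheory.tendsto_cdf_atBot (P.map X)).eventually_lt_const hs.1).exists
  refine ⟨b, fun x hx => ?_⟩
  by_contra! hlt
  exact absurd (hx.trans (ProbabilityTheory.monotone_cdf _ hlt.le)) (not_le.2 hb)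

lemma bddBelow_lt_cdf (hX : Measurable X) {s : ℝ} (hs : s ∈ Set.Ioo (0:ℝ) 1) :
    BddBelow {x : ℝ | s < (P {ω | X ω ≤ x}).toReal} :=
  by
  refine (bddBelow_le_cdf (P := P) hX hs).mono fun x hx => ?_
  exact le_of_lt (show s < _ from hx)

/-- The lower quantile function of `X`. -/
def lowerQ (P : Measure Ω) (X : Ω → ℝ) (s : ℝ) : ℝ :=
  sInf {x : ℝ | s ≤ (P {ω | X ω ≤ x}).toReal}

lemma isQuantile_lowerQ (hX : Measurable X) : IsQuantile P X (lowerQ P X) := by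
  refine fun s hs => ⟨le_rfl, csInf_le_csInf (bddBelow_le_cdf hX hs) (nonempty_lt_cdf hX hs) ?_⟩
  exact fun x hx => le_of_lt (show s < _ from hx)

lemma IsQuantile.le_of_lt (hX : Measurable X) {q : ℝ → ℝ} (hq : IsQuantile P X q) {s x : ℝ}
    (hs : s ∈ Set.Ioo (0:ℝ) 1) (h : s < (P {ω | X ω ≤ x}).toReal) : q s ≤ x :=
  (hq s hs).2.trans (csInf_le (bddBelow_lt_cdf hX hs) h)

lemma IsQuantile.le_cdf (hX : Measurable X) {q : ℝ → ℝ} (hq : IsQuantile P X q) {s x : ℝ}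
    (hs : s ∈ Set.Ioo (0:ℝ) 1) (h : q s ≤ x) : s ≤ (P {ω | X ω ≤ x}).toReal := by
  have h1 := (hq s hs).1.trans h
  have hgt : ∀ y, x < y → s ≤ (P {ω | X ω ≤ y}).toReal := by
    intro y hy
    obtain ⟨z, hz, hzy⟩ := exists_lt_of_csInf_lt (nonempty_le_cdf hX hs) (h1.trans_lt hy)
    replace hz : s ≤ (P {ω | X ω ≤ z}).toReal := hz
    rw [cdf_map_eq hX] at hz ⊢
    exact hz.trans (ProbabilityTheory.monotone_cdf _ hzy.le)
  simp only [cdf_map_eq hX] at hgt ⊢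
  -- right-continuity of the distribution function
  have hc : Filter.Tendsto (ProbabilityTheory.cdf (P.map X)) (nhdsWithin x (Set.Ioi x))
      (nhds (ProbabilityTheory.cdf (P.map X) x)) :=
    ((ProbabilityTheory.cdf (P.map X)).right_continuous x).tendsto.mono_left
      (nhdsWithin_mono _ Set.Ioi_subset_Ici_self)
  exact ge_of_tendsto hc (by filter_upwards [self_mem_nhdsWithin] with y hy using hgt y hy)

lemma IsQuantile.monotoneOn (hX : Measurable X) {q : ℝ → ℝ} (hq : IsQuantile P X q) :
    MonotoneOn q (Set.Ioo (0:ℝ) 1) := by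
  intro s hs t ht hst
  rcases hst.eq_or_lt with rfl | hlt
  · exact le_rfl
  · exact (hq s hs).2.trans (le_trans (csInf_le_csInf (bddBelow_lt_cdf hX hs)
      (nonempty_le_cdf hX ht) fun _ hx => lt_of_lt_of_le hlt hx) (hq t ht).1)

lemma IsQuantile.aemeasurable (hX : Measurable X) {q : ℝ → ℝ} (hq : IsQuantile P X q) :
    AEMeasurable q unif :=
  aemeasurable_restrict_of_monotoneOn measurableSet_Ioo (hq.monotoneOn hX)

/-- Any quantile function of `X`, seen as a random variable on `(0, 1)`, has the law of `X`:
`{q ≤ x}` lies between `{s < F(x)}` and `{s ≤ F(x)}`. -/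
lemma IsQuantile.map_eq (hX : Measurable X) {q : ℝ → ℝ} (hq : IsQuantile P X q) :
    unif.map q = P.map X := by
  have hqm := hq.aemeasurable hX
  have := Measure.isProbabilityMeasure_map hqm
  have := Measure.isProbabilityMeasure_map (μ := P) hX.aemeasurable
  refine Measure.ext_of_Iic _ _ fun x => ?_
  rw [Measure.map_apply_of_aemeasurable hqm measurableSet_Iic,
    Measure.map_apply hX measurableSet_Iic]
  set c := (P {ω | X ω ≤ x}).toReal with hc
  have hc1 : c ≤ 1 := ENNReal.toReal_le_of_le_ofReal zero_le_one (by simpa using prob_le_one)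
  have hPc : P (X ⁻¹' Set.Iic x) = ENNReal.ofReal c := by
    rw [hc, ENNReal.ofReal_toReal (measure_ne_top _ _)]; rfl
  rw [hPc, Measure.restrict_apply' measurableSet_Ioo]
  apply le_antisymm
  · calc volume (q ⁻¹' Set.Iic x ∩ Set.Ioo 0 1) ≤ volume (Set.Ioc 0 c) :=
        measure_mono fun s hs => ⟨hs.2.1, hq.le_cdf hX hs.2 hs.1⟩
      _ = ENNReal.ofReal c := by simp
  · calc ENNReal.ofReal c = volume (Set.Ioo 0 c) := by simp
      _ ≤ volume (q ⁻¹' Set.Iic x ∩ Set.Ioo 0 1) := measure_mono fun s hs =>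
        have h : s ∈ Set.Ioo (0:ℝ) 1 := ⟨hs.1, hs.2.trans_le hc1⟩
        ⟨hq.le_of_lt hX h hs.2, h⟩

lemma SameLaw.isQuantile {X' : Ω → ℝ} (hX : Measurable X) (hX' : Measurable X')
    (h : SameLaw P X X') {q : ℝ → ℝ} (hq : IsQuantile P X q) : IsQuantile P X' q := by
  intro s hs
  have := hq s hs
  unfold SameLaw at h
  simpa only [cdf_map_eq hX, cdf_map_eq hX', h] using this

end

/-! ### A uniform random variable adapted to a given one -/

section
variable {P : Measure Ω} [IsProbabilityMeasure P]

lemma IsAtomless.exists_small (hP : IsAtomless P) {A : Set Ω} (hA : MeasurableSet A)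
    (hpos : 0 < P A) {ε : ℝ≥0∞} (hε : 0 < ε) :
    ∃ B, MeasurableSet B ∧ B ⊆ A ∧ 0 < P B ∧ P B ≤ ε := by
  -- repeated halving
  have key : ∀ n : ℕ, ∃ B, MeasurableSet B ∧ B ⊆ A ∧ 0 < P B ∧ P B ≤ 2⁻¹ ^ n := by
    intro n
    induction n with
    | zero => exact ⟨A, hA, subset_rfl, hpos, by simpa using prob_le_one⟩
    | succ n ih =>
      obtain ⟨B, hB, hBA, hB0, hBn⟩ := ih
      obtain ⟨D, hD, hDB, hD0, hDlt⟩ := hP B hB hB0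
      have hsum : P D + P (B \ D) = P B := by
        rw [← measure_inter_add_sdiff B hD, Set.inter_eq_self_of_subset_right hDB]
      have hdiff0 : 0 < P (B \ D) := by
        rw [pos_iff_ne_zero]
        intro h0
        rw [h0, add_zero] at hsum
        exact hDlt.ne hsum
      have hhalf : (2⁻¹ : ℝ≥0∞) ^ (n + 1) + 2⁻¹ ^ (n + 1) = 2⁻¹ ^ n := by
        rw [pow_succ, ← mul_add, ENNReal.inv_two_add_inv_two, mul_one]
      by_cases h : P D ≤ 2⁻¹ ^ (n + 1)
      · exact ⟨D, hD, hDB.trans hBA, hD0, h⟩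
      · refine ⟨B \ D, hB.diff hD, sdiff_subset.trans hBA, hdiff0, ?_⟩
        by_contra! h'
        have := ENNReal.add_lt_add (not_le.1 h) h'
        rw [hsum, hhalf] at this
        exact absurd hBn (not_le.2 this)
  obtain ⟨n, hn⟩ := ENNReal.exists_inv_two_pow_lt hε.ne'
  obtain ⟨B, h1, h2, h3, h4⟩ := key n
  exact ⟨B, h1, h2, h3, h4.trans hn.le⟩

/-- By exhaustion, `Ω` is a countable union of sets of measure at most `ε`. -/
lemma IsAtomless.exists_cover (hP : IsAtomless P) {ε : ℝ≥0∞} (hε : 0 < ε) :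
    ∃ A : ℕ → Set Ω, (∀ n, MeasurableSet (A n)) ∧ (∀ n, P (A n) ≤ ε) ∧ ⋃ n, A n = univ := by
  let good : Set (ℕ → Set Ω) := {A | (∀ n, MeasurableSet (A n)) ∧ ∀ n, P (A n) ≤ ε}
  let S : Set ℝ≥0∞ := (fun A : ℕ → Set Ω => P (⋃ n, A n)) '' good
  have hSne : S.Nonempty := ⟨_, fun _ => ∅, ⟨by simp, by simp⟩, rfl⟩
  obtain ⟨u, -, hu, huS⟩ := exists_seq_tendsto_sSup hSne (OrderTop.bddAbove S)
  choose A hA hAu using huS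
  -- the union of all members of a maximizing sequence of families
  let B : ℕ → Set Ω := fun k => A k.unpair.1 k.unpair.2
  have hBgood : B ∈ good := ⟨fun k => (hA _).1 _, fun k => (hA _).2 _⟩
  have hsub : ∀ n, (⋃ m, A n m) ⊆ ⋃ k, B k := fun n =>
    iUnion_subset fun m => by
      have : A n m = B (Nat.pair n m) := by simp [B]
      rw [this]
      exact subset_iUnion B _
  have hsup : sSup S ≤ P (⋃ k, B k) :=
    le_of_tendsto' hu fun n => by rw [← hAu n]; exact measure_mono (hsub n)
  have hBm : MeasurableSet (⋃ k, B k) := MeasurableSet.iUnion hBgood.1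
  have hnull : P (⋃ k, B k)ᶜ = 0 := by
    by_contra hne
    obtain ⟨D, hD, hDs, hD0, hDε⟩ := hP.exists_small hBm.compl (pos_iff_ne_zero.2 hne) hε
    let B' : ℕ → Set Ω := fun k => Nat.casesOn k D B
    have hB' : B' ∈ good := by
      constructor
      · rintro (_ | k)
        exacts [hD, hBgood.1 k]
      · rintro (_ | k)
        exacts [hDε, hBgood.2 k]
    have hle : P (⋃ k, B' k) ≤ sSup S := le_sSup ⟨B', hB', rfl⟩
    have hU : D ∪ (⋃ k, B k) ⊆ ⋃ k, B' k :=
      union_subset (subset_iUnion B' 0) (iUnion_subset fun k => subset_iUnion B' (k + 1))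
    have hdisj : Disjoint D (⋃ k, B k) := disjoint_left.2 fun x hx => hDs hx
    have h1 : P D + P (⋃ k, B k) ≤ P (⋃ k, B k) := by
      rw [← measure_union hdisj hBm]
      exact ((measure_mono hU).trans hle).trans hsup
    have h2 : P (⋃ k, B k) < P D + P (⋃ k, B k) := by
      rw [add_comm]
      exact ENNReal.lt_add_right (measure_ne_top _ _) hD0.ne'
    exact absurd h1 (not_le.2 h2)
  refine ⟨fun k => Nat.casesOn k (⋃ k, B k)ᶜ B, ?_, ?_, ?_⟩
  · rintro (_ | k)
    exacts [hBm.compl, hBgood.1 k]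
  · rintro (_ | k)
    · exact hnull.le.trans zero_le
    · exact hBgood.2 k
  · refine eq_univ_of_forall fun x => ?_
    by_cases hx : x ∈ ⋃ k, B k
    · obtain ⟨k, hk⟩ := mem_iUnion.1 hx
      exact mem_iUnion.2 ⟨k + 1, hk⟩
    · exact mem_iUnion.2 ⟨0, hx⟩

/-- An atomless probability space carries a real random variable with atomless law. It codes,
for every `n`, the cell containing `ω` in a countable cover by sets of measure at most `2⁻ⁿ`. -/
lemma IsAtomless.exists_continuous (hP : IsAtomless P) :
    ∃ V : Ω → ℝ, Measurable V ∧ ∀ v, P {ω | V ω = v} = 0 := by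
  have hpos : ∀ n : ℕ, (0 : ℝ≥0∞) < 2⁻¹ ^ n := fun n => ENNReal.pow_pos (by simp) n
  choose A hAm hAε hAU using fun n : ℕ => hP.exists_cover (hpos n)
  classical
  have hex : ∀ n ω, ∃ k, ω ∈ A n k := fun n ω => mem_iUnion.1 (by rw [hAU n]; trivial)
  let c : Ω → ℕ → ℕ := fun ω n => Nat.find (hex n ω)
  have hc : Measurable c := measurable_pi_lambda _ fun n =>
    measurable_find (hex n) fun k => hAm n k
  obtain ⟨e, he⟩ := exists_measurableEmbedding_real (ℕ → ℕ)
  refine ⟨e ∘ c, he.measurable.comp hc, fun v => ?_⟩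
  rcases Set.eq_empty_or_nonempty {ω | (e ∘ c) ω = v} with h | ⟨ω₀, h₀⟩
  · rw [h, measure_empty]
  have hle : ∀ n : ℕ, P {ω | (e ∘ c) ω = v} ≤ 2⁻¹ ^ n := by
    intro n
    refine (measure_mono fun ω hω => ?_).trans (hAε n (c ω₀ n))
    have heq : c ω = c ω₀ := he.injective (Eq.trans hω h₀.symm)
    rw [← heq]
    exact Nat.find_spec (hex n ω)
  by_contra hne
  obtain ⟨n, hn⟩ := ENNReal.exists_inv_two_pow_lt hne
  exact absurd (hle n) (not_le.2 hn)

/-- For a measurable total preorder `r` on `Ω`, the rank `ω ↦ P{ω' : r ω' ω}` is stochastically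
at least uniform. If `s` is the supremum of the rank on
`D = {rank ≤ t}`, a countable union of initial segments of measure `s` exhausts `D` up to a set
`N` on which every initial segment is null, and `P(N) = 0` by Fubini. -/
lemma measure_rank_le {r : Ω → Ω → Prop} (hr : MeasurableSet {p : Ω × Ω | r p.1 p.2})
    (htot : ∀ a b, r a b ∨ r b a) (htrans : ∀ a b c, r a b → r b c → r a c)
    (t : ℝ≥0∞) : P {ω | P {ω' | r ω' ω} ≤ t} ≤ t := by
  have hseg : ∀ ω, MeasurableSet {ω' | r ω' ω} := fun ω => measurable_prodMk_right hr
  set U : Ω → ℝ≥0∞ := fun ω => P {ω' | r ω' ω} with hU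
  have hUm : Measurable U := measurable_measure_prodMk_right hr
  have hmono : ∀ a b, r a b → {ω' | r ω' a} ⊆ {ω' | r ω' b} :=
    fun a b hab x hx => htrans x a b hx hab
  set D : Set Ω := {ω | U ω ≤ t} with hD
  have hDm : MeasurableSet D := hUm measurableSet_Iic
  rcases Set.eq_empty_or_nonempty D with h0 | hne
  · rw [h0]; simp
  obtain ⟨u, -, hu, huD⟩ := exists_seq_tendsto_sSup (hne.image U) (OrderTop.bddAbove _)
  choose w hwD hwu using huD
  set s := sSup (U '' D) with hs
  have hUs : ∀ ω ∈ D, U ω ≤ s := fun ω hω => le_sSup ⟨ω, hω, rfl⟩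
  have hst : s ≤ t := sSup_le (by rintro _ ⟨ω, hω, rfl⟩; exact hω)
  set D' : Set Ω := ⋃ n, {ω' | r ω' (w n)} with hD'
  have hD'm : MeasurableSet D' := MeasurableSet.iUnion fun n => hseg _
  have hdir : Directed (· ⊆ ·) fun n => {ω' | r ω' (w n)} := by
    intro m n
    rcases htot (w m) (w n) with h | h
    · exact ⟨n, hmono _ _ h, subset_rfl⟩
    · exact ⟨m, subset_rfl, hmono _ _ h⟩
  have hPD'le : P D' ≤ s := by
    rw [hD', hdir.measure_iUnion]
    exact iSup_le fun n => hUs _ (hwD n)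
  have hPD'ge : s ≤ P D' :=
    le_of_tendsto' hu fun n => by
      rw [← hwu n]
      exact measure_mono (subset_iUnion (fun n => {ω' | r ω' (w n)}) n)
  set N := D \ D' with hN
  have hNm : MeasurableSet N := hDm.diff hD'm
  have hNseg : ∀ ω ∈ N, P ({ω' | r ω' ω} ∩ N) = 0 := by
    intro ω hω
    have hsub : D' ⊆ {ω' | r ω' ω} := by
      refine iUnion_subset fun n => hmono _ _ ?_
      rcases htot (w n) ω with h | h
      · exact h
      · exact absurd (mem_iUnion.2 ⟨n, h⟩) hω.2
    have hdisj : Disjoint ({ω' | r ω' ω} ∩ N) D' :=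
      disjoint_left.2 fun x hx hx' => hx.2.2 hx'
    have h1 : P ({ω' | r ω' ω} ∩ N) + P D' ≤ P D' := by
      rw [← measure_union hdisj hD'm]
      exact (measure_mono (union_subset inter_subset_left hsub)).trans
        ((hUs ω hω.1).trans hPD'ge)
    by_contra hne0
    have := ENNReal.lt_add_right (measure_ne_top P D') hne0
    rw [add_comm] at this
    exact absurd h1 (not_le.2 this)
  have hN0 : P N = 0 := by
    set K : Set (Ω × Ω) := {p | r p.1 p.2} ∩ N ×ˢ N with hK
    have hKm : MeasurableSet K := hr.inter (hNm.prod hNm)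
    have hK0 : (P.prod P) K = 0 := by
      rw [Measure.prod_apply_symm hKm, lintegral_eq_zero_iff (measurable_measure_prodMk_right hKm)]
      refine Filter.Eventually.of_forall fun ω => ?_
      by_cases hω : ω ∈ N
      · refine measure_mono_null (fun x hx => ?_) (hNseg ω hω)
        exact ⟨hx.1, hx.2.1⟩
      · have : (fun x => (x, ω)) ⁻¹' K = ∅ := by
          ext x; simp [hK, hω]
        simp [this]
    have hK0' : (P.prod P) (Prod.swap ⁻¹' K) = 0 := by
      rw [← Measure.map_apply measurable_swap hKm, Measure.prod_swap, hK0]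
    have hcov : N ×ˢ N ⊆ K ∪ Prod.swap ⁻¹' K := by
      rintro ⟨a, b⟩ hab
      rcases htot a b with h | h
      · exact Or.inl ⟨h, hab⟩
      · exact Or.inr ⟨h, hab.2, hab.1⟩
    have := measure_mono_null hcov (measure_union_null hK0 hK0')
    rw [Measure.prod_prod] at this
    simpa using this
  calc P D ≤ P (D' ∪ N) := measure_mono fun x hx => by
        by_cases h : x ∈ D'
        · exact Or.inl h
        · exact Or.inr ⟨hx, h⟩
    _ ≤ P D' + P N := measure_union_le _ _
    _ ≤ t := by rw [hN0, add_zero]; exact hPD'le.trans hst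

end

section
variable {P : Measure Ω} [IsProbabilityMeasure P]

lemma unif_Iic {t : ℝ} (h1 : t ≤ 1) : unif (Set.Iic t) = ENNReal.ofReal t := by
  rw [Measure.restrict_apply' measurableSet_Ioo]
  apply le_antisymm
  · calc volume (Set.Iic t ∩ Set.Ioo 0 1) ≤ volume (Set.Ioc 0 t) :=
        measure_mono fun s hs => ⟨hs.2.1, hs.1⟩
      _ = ENNReal.ofReal t := by simp
  · calc ENNReal.ofReal t = volume (Set.Ioo 0 t) := by simp
      _ ≤ volume (Set.Iic t ∩ Set.Ioo 0 1) := measure_mono fun s hs =>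
        ⟨hs.2.le, hs.1, hs.2.trans_le h1⟩

/-- On an atomless space there is a uniform `U` with `U ≤ F_X(X)`: the rank in the lexicographic
order of `(X, V)`, where `V` has atomless law and breaks the ties of `X`. -/
lemma IsAtomless.exists_uniform (hP : IsAtomless P) {X : Ω → ℝ} (hX : Measurable X) :
    ∃ U : Ω → ℝ, Measurable U ∧ P.map U = unif ∧
      ∀ ω, U ω ≤ (P {ω' | X ω' ≤ X ω}).toReal := by
  obtain ⟨V, hV, hV0⟩ := hP.exists_continuous
  let r : Ω → Ω → Prop := fun a b => X a < X b ∨ (X a = X b ∧ V a ≤ V b)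
  have hr : MeasurableSet {p : Ω × Ω | r p.1 p.2} :=
    (measurableSet_lt (hX.comp measurable_fst) (hX.comp measurable_snd)).union
      ((measurableSet_eq_fun (hX.comp measurable_fst) (hX.comp measurable_snd)).inter
        (measurableSet_le (hV.comp measurable_fst) (hV.comp measurable_snd)))
  have hr' : MeasurableSet {p : Ω × Ω | r p.2 p.1} := measurable_swap hr
  have htot : ∀ a b, r a b ∨ r b a := by
    intro a b
    rcases lt_trichotomy (X a) (X b) with h | h | h
    · exact Or.inl (Or.inl h)
    · rcases le_total (V a) (V b) with h' | h'
      · exact Or.inl (Or.inr ⟨h, h'⟩)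
      · exact Or.inr (Or.inr ⟨h.symm, h'⟩)
    · exact Or.inr (Or.inl h)
  have htrans : ∀ a b c, r a b → r b c → r a c := by
    rintro a b c (h | ⟨h, h'⟩) (k | ⟨k, k'⟩)
    · exact Or.inl (h.trans k)
    · exact Or.inl (h.trans_eq k)
    · exact Or.inl (h.trans_lt k)
    · exact Or.inr ⟨h.trans k, h'.trans k'⟩
  let U : Ω → ℝ := fun ω => (P {ω' | r ω' ω}).toReal
  have hUm : Measurable U := (measurable_measure_prodMk_right hr).ennreal_toReal
  have hU1 : ∀ ω, U ω ≤ 1 := fun ω =>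
    ENNReal.toReal_le_of_le_ofReal zero_le_one (by simpa using prob_le_one)
  -- ties are null, so the two opposite ranks of a point add up to one
  have hsum : ∀ ω, (P {ω' | r ω ω'}).toReal ≤ 1 - U ω := by
    intro ω
    have hm : MeasurableSet {ω' | r ω' ω} := measurable_prodMk_right hr
    have hnull : P ({ω' | r ω ω'} ∩ {ω' | r ω' ω}) = 0 := by
      refine measure_mono_null ?_ (hV0 (V ω))
      rintro ω' ⟨h | ⟨h, h'⟩, k | ⟨k, k'⟩⟩
      · exact absurd k h.not_gt
      · exact absurd k h.ne'
      · exact absurd h k.ne'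
      · exact le_antisymm k' h'
    have h1 : P {ω' | r ω ω'} ≤ P {ω' | r ω' ω}ᶜ := by
      rw [← measure_inter_add_sdiff {ω' | r ω ω'} hm, hnull, zero_add]
      exact measure_mono fun x hx => hx.2
    have h2 := ENNReal.toReal_mono (measure_ne_top _ _) h1
    rw [prob_compl_eq_one_sub hm, ENNReal.toReal_sub_of_le prob_le_one ENNReal.one_ne_top] at h2
    simpa using h2
  refine ⟨U, hUm, ?_, fun ω => ?_⟩
  · have := Measure.isProbabilityMeasure_map (μ := P) hUm.aemeasurable
    refine Measure.ext_of_Iic _ _ fun t => ?_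
    rw [Measure.map_apply hUm measurableSet_Iic]
    rcases le_or_gt 1 t with h1 | h1
    · have : U ⁻¹' Set.Iic t = univ := eq_univ_of_forall fun ω => (hU1 ω).trans h1
      rw [this, measure_univ]
      refine (le_antisymm prob_le_one ?_).symm
      calc (1 : ℝ≥0∞) = unif (Set.Iic 1) := by rw [unif_Iic le_rfl]; simp
        _ ≤ _ := measure_mono (Set.Iic_subset_Iic.2 h1)
    rw [unif_Iic h1.le]
    rcases lt_or_ge t 0 with h0 | h0
    · have : U ⁻¹' Set.Iic t = ∅ := by
        refine eq_empty_of_forall_notMem fun ω hω => ?_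
        exact absurd (le_trans ENNReal.toReal_nonneg (show U ω ≤ t from hω)) (not_le.2 h0)
      rw [this, measure_empty, ENNReal.ofReal_of_nonpos h0.le]
    apply le_antisymm
    · refine le_trans (measure_mono fun ω hω => ?_)
        (measure_rank_le (P := P) hr htot htrans (ENNReal.ofReal t))
      exact (ENNReal.le_ofReal_iff_toReal_le (measure_ne_top _ _) h0).2 hω
    · have hc : P (U ⁻¹' Set.Iic t)ᶜ ≤ ENNReal.ofReal (1 - t) := by
        refine le_trans (measure_mono fun ω hω => ?_)
          (measure_rank_le (P := P) (r := fun a b => r b a) hr' (fun a b => htot b a)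
            (fun a b c h k => htrans c b a k h) (ENNReal.ofReal (1 - t)))
        have hω' : t < U ω := not_le.1 hω
        refine (ENNReal.le_ofReal_iff_toReal_le (measure_ne_top _ _) (by linarith)).2 ?_
        linarith [hsum ω]
      have htop := prob_add_prob_compl (μ := P) (hUm (measurableSet_Iic (a := t)))
      have h2 : (1 : ℝ≥0∞) ≤ P (U ⁻¹' Set.Iic t) + ENNReal.ofReal (1 - t) := by
        rw [← htop]; gcongr
      have h3 : (1 : ℝ≥0∞) = ENNReal.ofReal t + ENNReal.ofReal (1 - t) := by
        rw [← ENNReal.ofReal_add h0 (by linarith)]; simp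
      rw [h3] at h2
      exact (ENNReal.add_le_add_iff_right ENNReal.ofReal_ne_top).1 h2
  · refine ENNReal.toReal_mono (measure_ne_top _ _) (measure_mono ?_)
    rintro ω' (h | ⟨h, -⟩)
    · exact h.le
    · exact h.le

/-- Two almost surely ordered random variables with the same law coincide almost surely. -/
lemma ae_eq_of_ae_le_of_map_eq {α : Type*} [MeasurableSpace α] {μ : Measure α}
    [IsFiniteMeasure μ] {f g : α → ℝ} (hf : AEMeasurable f μ) (hg : AEMeasurable g μ)
    (hle : f ≤ᵐ[μ] g) (h : μ.map f = μ.map g) : f =ᵐ[μ] g := by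
  have hintg : ∀ k : α → ℝ, AEMeasurable k μ → Integrable (fun a => Real.arctan (k a)) μ := by
    intro k hk
    refine Integrable.of_bound (Real.measurable_arctan.comp_aemeasurable hk).aestronglyMeasurable
      (Real.pi / 2) (Filter.Eventually.of_forall fun a => ?_)
    rw [Real.norm_eq_abs, abs_le]
    exact ⟨by linarith [Real.neg_pi_div_two_lt_arctan (k a)], (Real.arctan_lt_pi_div_two _).le⟩
  have heq : ∫ a, Real.arctan (f a) ∂μ = ∫ a, Real.arctan (g a) ∂μ := by
    rw [← integral_map hf Real.measurable_arctan.aestronglyMeasurable, h,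
      integral_map hg Real.measurable_arctan.aestronglyMeasurable]
  have := (integral_eq_iff_of_ae_le (hintg f hf) (hintg g hg)
    (hle.mono fun a ha => Real.arctan_strictMono.monotone ha)).1 heq
  exact this.mono fun a ha => Real.arctan_injective ha

/-- On an atomless space `X = q_X(U)` almost surely for some uniform `U`. Indeed
`U ≤ F_X(X)` gives `q_X⁻(U) ≤ X` for the lower quantile `q_X⁻ ≤ q_X`, and these three random
variables have the same law. -/
lemma IsAtomless.exists_uniform_quantile (hP : IsAtomless P) {X : Ω → ℝ} (hX : Measurable X)
    {q : ℝ → ℝ} (hq : IsQuantile P X q) :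
    ∃ U : Ω → ℝ, Measurable U ∧ P.map U = unif ∧ X =ᵐ[P] fun ω => q (U ω) := by
  obtain ⟨U, hU, hUu, hUX⟩ := hP.exists_uniform hX
  refine ⟨U, hU, hUu, ?_⟩
  have hl := isQuantile_lowerQ (P := P) hX
  have hlm := hl.aemeasurable hX
  have hlq : lowerQ P X =ᵐ[unif] q := by
    refine ae_eq_of_ae_le_of_map_eq hlm (hq.aemeasurable hX) ?_
      ((hl.map_eq hX).trans (hq.map_eq hX).symm)
    filter_upwards [ae_restrict_mem measurableSet_Ioo] with s hs using (hq s hs).1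
  have hlq' : (fun ω => lowerQ P X (U ω)) =ᵐ[P] fun ω => q (U ω) := by
    rw [← hUu] at hlq
    exact ae_of_ae_map hU.aemeasurable hlq
  have hUI : ∀ᵐ ω ∂P, U ω ∈ Set.Ioo (0:ℝ) 1 := by
    refine ae_of_ae_map hU.aemeasurable (p := fun s => s ∈ Set.Ioo (0:ℝ) 1) ?_
    rw [hUu]
    exact ae_restrict_mem measurableSet_Ioo
  have hlm' : AEMeasurable (lowerQ P X) (P.map U) := by rwa [hUu]
  have hlX : (fun ω => lowerQ P X (U ω)) =ᵐ[P] X := by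
    refine ae_eq_of_ae_le_of_map_eq (hlm'.comp_measurable hU) hX.aemeasurable ?_ ?_
    · filter_upwards [hUI] with ω hω
      exact csInf_le (bddBelow_le_cdf hX hω) (hUX ω)
    · rw [← hl.map_eq hX, ← hUu]
      exact (AEMeasurable.map_map_of_aemeasurable hlm' hU.aemeasurable).symm
  exact hlX.symm.trans hlq'

end

/-! ### The Hardy–Littlewood inequality -/

section
variable {α β : Type*} [MeasurableSpace α] [MeasurableSpace β]

lemma lintegral_mul_layer {μ : Measure α} [IsFiniteMeasure μ] {f g : α → ℝ}
    (hf : AEMeasurable f μ) (hg : AEMeasurable g μ) (hf0 : ∀ a, 0 ≤ f a) (hg0 : ∀ a, 0 ≤ g a) :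
    ∫⁻ a, ENNReal.ofReal (f a * g a) ∂μ =
      ∫⁻ x in Set.Ioi (0:ℝ), ∫⁻ y in Set.Ioi (0:ℝ), μ ({a | y < g a} ∩ {a | x < f a}) := by
  have h1 : ∫⁻ a, ENNReal.ofReal (f a * g a) ∂μ =
      ∫⁻ a, ENNReal.ofReal (f a) ∂(μ.withDensity fun a => ENNReal.ofReal (g a)) := by
    rw [lintegral_withDensity_eq_lintegral_mul₀ hg.ennreal_ofReal hf.ennreal_ofReal]
    refine lintegral_congr fun a => ?_
    rw [Pi.mul_apply, ← ENNReal.ofReal_mul (hg0 a), mul_comm]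
  rw [h1, lintegral_eq_lintegral_meas_lt _ (Filter.Eventually.of_forall hf0)
    (hf.mono_ac (withDensity_absolutelyContinuous _ _))]
  refine lintegral_congr fun x => ?_
  rw [withDensity_apply' _ _, lintegral_eq_lintegral_meas_lt _ (Filter.Eventually.of_forall hg0)
    hg.restrict]
  refine lintegral_congr fun y => ?_
  rw [Measure.restrict_apply₀' (nullMeasurableSet_lt aemeasurable_const hf)]

lemma abs_trunc_le (n : ℕ) (x : ℝ) : |max x (-n)| ≤ |x| := by
  have hn : (0:ℝ) ≤ n := n.cast_nonneg
  rcases max_cases x (-(n:ℝ)) with ⟨h, -⟩ | ⟨h, h'⟩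
  · rw [h]
  · rw [h, abs_neg, abs_of_nonneg hn, abs_of_neg (by linarith)]; linarith

lemma integrable_trunc {m : Measure α} [IsProbabilityMeasure m] {k : α → ℝ} (n : ℕ)
    (hk : Integrable k m) : Integrable (fun c => max (k c) (-(n:ℝ))) m :=
  hk.sup (integrable_const _)

lemma integrable_trunc_mul {m : Measure α} [IsProbabilityMeasure m] {k l : α → ℝ} (n : ℕ)
    (hk : Integrable k m) (hl : Integrable l m)
    (hkl : Integrable (fun c => k c * l c) m) :
    Integrable (fun c => max (k c) (-(n:ℝ)) * max (l c) (-(n:ℝ))) m := by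
  refine hkl.mono ((integrable_trunc n hk).aestronglyMeasurable.mul
    (integrable_trunc n hl).aestronglyMeasurable) (Filter.Eventually.of_forall fun c => ?_)
  rw [norm_mul, norm_mul]
  exact mul_le_mul (abs_trunc_le n _) (abs_trunc_le n _) (norm_nonneg _) (norm_nonneg _)

lemma integral_trunc_shift_mul {m : Measure α} [IsProbabilityMeasure m] {k l : α → ℝ} (n : ℕ)
    (hk : Integrable k m) (hl : Integrable l m)
    (hkl : Integrable (fun c => k c * l c) m) :
    Integrable (fun c => (max (k c) (-(n:ℝ)) + n) * (max (l c) (-(n:ℝ)) + n)) m ∧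
    ∫ c, (max (k c) (-(n:ℝ)) + n) * (max (l c) (-(n:ℝ)) + n) ∂m =
      ∫ c, max (k c) (-(n:ℝ)) * max (l c) (-(n:ℝ)) ∂m + n * ∫ c, max (k c) (-(n:ℝ)) ∂m
        + n * ∫ c, max (l c) (-(n:ℝ)) ∂m + n * n := by
  have i1 := integrable_trunc_mul n hk hl hkl
  have i2 := (integrable_trunc n hk).const_mul (n:ℝ)
  have i3 := (integrable_trunc n hl).const_mul (n:ℝ)
  have i4 : Integrable (fun _ : α => (n:ℝ) * n) m := integrable_const _
  have i12 : Integrable (fun c => max (k c) (-(n:ℝ)) * max (l c) (-(n:ℝ))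
      + n * max (k c) (-(n:ℝ))) m := i1.add i2
  have i123 : Integrable (fun c => max (k c) (-(n:ℝ)) * max (l c) (-(n:ℝ))
      + n * max (k c) (-(n:ℝ)) + n * max (l c) (-(n:ℝ))) m := i12.add i3
  have he : (fun c => (max (k c) (-(n:ℝ)) + n) * (max (l c) (-(n:ℝ)) + n)) =
      fun c => max (k c) (-(n:ℝ)) * max (l c) (-(n:ℝ)) + n * max (k c) (-(n:ℝ))
        + n * max (l c) (-(n:ℝ)) + n * n := by
    ext c; ring
  rw [he]
  refine ⟨i123.add i4, ?_⟩
  rw [integral_add i123 i4, integral_add i12 i3, integral_add i1 i2,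
    integral_const_mul, integral_const_mul]
  simp

lemma tendsto_integral_trunc_mul {m : Measure α} [IsProbabilityMeasure m] {k l : α → ℝ}
    (hk : Integrable k m) (hl : Integrable l m)
    (hkl : Integrable (fun c => k c * l c) m) :
    Filter.Tendsto (fun n : ℕ => ∫ c, max (k c) (-(n:ℝ)) * max (l c) (-(n:ℝ)) ∂m)
      Filter.atTop (nhds (∫ c, k c * l c ∂m)) := by
  refine tendsto_integral_of_dominated_convergence (fun c => ‖k c * l c‖)
    (fun n => (integrable_trunc_mul n hk hl hkl).aestronglyMeasurable) hkl.norm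
    (fun n => Filter.Eventually.of_forall fun c => ?_)
    (Filter.Eventually.of_forall fun c => ?_)
  · rw [norm_mul, norm_mul]
    exact mul_le_mul (abs_trunc_le n _) (abs_trunc_le n _) (norm_nonneg _) (norm_nonneg _)
  · obtain ⟨n₀, hn₀⟩ := exists_nat_ge (max (-(k c)) (-(l c)))
    refine tendsto_const_nhds.congr' ?_
    filter_upwards [Filter.eventually_ge_atTop n₀] with n hn
    have hn' : (n₀:ℝ) ≤ n := by exact_mod_cast hn
    have h1 := (le_max_left (-(k c)) (-(l c))).trans (hn₀.trans hn')
    have h2 := (le_max_right (-(k c)) (-(l c))).trans (hn₀.trans hn')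
    rw [max_eq_left (by linarith), max_eq_left (by linarith)]

/-- Hardy–Littlewood: among couplings of two given laws, one whose upper level sets are nested
(up to measure) maximizes the expected product. For nonnegative variables this is the layer-cake
formula; in general one truncates from below at `-n`, shifts by `n`, and lets `n → ∞`. -/
lemma hardy_littlewood {μ : Measure α} {ν : Measure β} [IsProbabilityMeasure μ]
    [IsProbabilityMeasure ν] {f g : α → ℝ} {f' g' : β → ℝ}
    (hf : Integrable f μ) (hg : Integrable g μ) (hfg : Integrable (fun a => f a * g a) μ)
    (hf' : AEMeasurable f' ν) (hg' : AEMeasurable g' ν)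
    (hfg' : Integrable (fun a => f' a * g' a) ν)
    (hmf : μ.map f = ν.map f') (hmg : μ.map g = ν.map g')
    (hnest : ∀ x y : ℝ, min (ν {b | x < f' b}) (ν {b | y < g' b}) ≤
      ν ({b | y < g' b} ∩ {b | x < f' b})) :
    ∫ a, f a * g a ∂μ ≤ ∫ b, f' b * g' b ∂ν := by
  have hfm := hf.aemeasurable
  have hgm := hg.aemeasurable
  have hf'i : Integrable f' ν :=
    (ProbabilityTheory.IdentDistrib.integrable_iff (⟨hfm, hf', hmf⟩ : ProbabilityTheory.IdentDistrib f f' μ ν)).1 hf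
  have hg'i : Integrable g' ν :=
    (ProbabilityTheory.IdentDistrib.integrable_iff (⟨hgm, hg', hmg⟩ : ProbabilityTheory.IdentDistrib g g' μ ν)).1 hg
  have hlevf : ∀ x, μ {a | x < f a} = ν {b | x < f' b} := by
    intro x
    have := congrArg (fun m => m (Set.Ioi x)) hmf
    simpa [Measure.map_apply_of_aemeasurable, hfm, hf', Set.preimage] using this
  have hlevg : ∀ x, μ {a | x < g a} = ν {b | x < g' b} := by
    intro x
    have := congrArg (fun m => m (Set.Ioi x)) hmg
    simpa [Measure.map_apply_of_aemeasurable, hgm, hg', Set.preimage] using this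
  have hlev : ∀ (n : ℕ) (x z : ℝ), 0 < x → (x < max z (-n) + n ↔ x - n < z) := by
    intro n x z hx
    rw [← sub_lt_iff_lt_add, lt_max_iff]
    constructor
    · rintro (h | h)
      · exact h
      · linarith
    · exact Or.inl
  have hstep : ∀ n : ℕ, ∫ a, max (f a) (-(n:ℝ)) * max (g a) (-(n:ℝ)) ∂μ ≤
      ∫ b, max (f' b) (-(n:ℝ)) * max (g' b) (-(n:ℝ)) ∂ν := by
    intro n
    obtain ⟨j1, e1⟩ := integral_trunc_shift_mul n hf hg hfg
    obtain ⟨j2, e2⟩ := integral_trunc_shift_mul n hf'i hg'i hfg'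
    have hpos : ∀ x : ℝ, 0 ≤ max x (-(n:ℝ)) + n := fun x => by
      linarith [le_max_right x (-(n:ℝ))]
    have hmain : ∫ a, (max (f a) (-(n:ℝ)) + n) * (max (g a) (-(n:ℝ)) + n) ∂μ ≤
        ∫ b, (max (f' b) (-(n:ℝ)) + n) * (max (g' b) (-(n:ℝ)) + n) ∂ν := by
      rw [integral_eq_lintegral_of_nonneg_ae
          (Filter.Eventually.of_forall fun a => mul_nonneg (hpos _) (hpos _))
          j1.aestronglyMeasurable,
        integral_eq_lintegral_of_nonneg_ae
          (Filter.Eventually.of_forall fun a => mul_nonneg (hpos _) (hpos _))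
          j2.aestronglyMeasurable]
      have hfin : ∫⁻ b, ENNReal.ofReal
          ((max (f' b) (-(n:ℝ)) + n) * (max (g' b) (-(n:ℝ)) + n)) ∂ν ≠ ⊤ :=
        (hasFiniteIntegral_iff_ofReal
          (Filter.Eventually.of_forall fun a => mul_nonneg (hpos _) (hpos _))).1 j2.2 |>.ne
      refine ENNReal.toReal_mono hfin ?_
      rw [lintegral_mul_layer ((integrable_trunc n hf).aemeasurable.add_const _)
          ((integrable_trunc n hg).aemeasurable.add_const _) (fun _ => hpos _) (fun _ => hpos _),
        lintegral_mul_layer ((integrable_trunc n hf'i).aemeasurable.add_const _)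
          ((integrable_trunc n hg'i).aemeasurable.add_const _) (fun _ => hpos _) (fun _ => hpos _)]
      refine setLIntegral_mono' measurableSet_Ioi fun x hx => ?_
      refine setLIntegral_mono' measurableSet_Ioi fun y hy => ?_
      simp only [hlev n x _ hx, hlev n y _ hy]
      refine le_trans ?_ (hnest _ _)
      rw [← hlevf, ← hlevg]
      exact le_min (measure_mono inter_subset_right) (measure_mono inter_subset_left)
    have hlaw : ∀ {k : α → ℝ} {k' : β → ℝ}, AEMeasurable k μ → AEMeasurable k' ν →
        μ.map k = ν.map k' → ∫ a, max (k a) (-(n:ℝ)) ∂μ = ∫ b, max (k' b) (-(n:ℝ)) ∂ν := by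
      intro k k' hk hk' h
      have hm : Measurable fun x : ℝ => max x (-(n:ℝ)) := measurable_id.max measurable_const
      rw [← integral_map hk hm.aestronglyMeasurable, h, integral_map hk' hm.aestronglyMeasurable]
    rw [e1, e2, hlaw hfm hf' hmf, hlaw hgm hg' hmg] at hmain
    linarith
  exact le_of_tendsto_of_tendsto' (tendsto_integral_trunc_mul hf hg hfg) (tendsto_integral_trunc_mul hf'i hg'i hfg') hstep

end

/-! ### Law invariance -/

section
variable {P : Measure Ω} [IsProbabilityMeasure P]

lemma quantile_nested {X Y : Ω → ℝ} (hX : Measurable X) (hY : Measurable Y)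
    {qX qY : ℝ → ℝ} (hqX : IsQuantile P X qX) (hqY : IsQuantile P Y qY) (x y : ℝ) :
    min (unif {s | x < qX s}) (unif {s | y < qY s}) ≤
      unif ({s | y < qY s} ∩ {s | x < qX s}) := by
  simp only [unif, Measure.restrict_apply' measurableSet_Ioo]
  have hmX := hqX.monotoneOn hX
  have hmY := hqY.monotoneOn hY
  by_cases h : {s | x < qX s} ∩ Set.Ioo 0 1 ⊆ {s | y < qY s}
  · exact (min_le_left _ _).trans (measure_mono fun s hs => ⟨⟨h hs, hs.1⟩, hs.2⟩)
  · refine (min_le_right _ _).trans (measure_mono fun s hs => ⟨⟨hs.1, ?_⟩, hs.2⟩)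
    obtain ⟨t, ht, hty⟩ := not_subset.1 h
    rcases le_total t s with hts | hst
    · exact lt_of_lt_of_le ht.1 (hmX ht.2 hs.2 hts)
    · exact absurd (lt_of_lt_of_le hs.1 (hmY hs.2 ht.2 hst)) hty

/-- If `XY'` is integrable for every `Y'` distributed as `Y`, then `∫ q_X q_Y` is the maximum of
`E[XY']` over such `Y'`; it bounds `E[XY]` and is attained by `Y' = q_Y(U)`, where `U` is uniform
with `X = q_X(U)`. -/
lemma IsAtomless.quantile_coupling (hP : IsAtomless P) {X Y : Ω → ℝ}
    (hX : Measurable X) (hY : Measurable Y) (hXi : Integrable X P) (hYi : Integrable Y P)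
    (hintg : ∀ Y', Measurable Y' → SameLaw P Y' Y → Integrable (fun ω => X ω * Y' ω) P)
    {qX qY : ℝ → ℝ} (hqX : IsQuantile P X qX) (hqY : IsQuantile P Y qY) :
    ∫ ω, X ω * Y ω ∂P ≤ ∫ s in Set.Ioo (0:ℝ) 1, qX s * qY s ∧
    ∃ Y', Measurable Y' ∧ SameLaw P Y' Y ∧
      ∫ ω, X ω * Y' ω ∂P = ∫ s in Set.Ioo (0:ℝ) 1, qX s * qY s := by
  obtain ⟨U, hU, hUu, hXU⟩ := hP.exists_uniform_quantile hX hqX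
  have hqXm := hqX.aemeasurable hX
  have hqYm := hqY.aemeasurable hY
  -- `q_Y` need not be measurable outside `(0, 1)`, hence the measurable version
  let k := hqYm.mk qY
  have hk : Measurable k := hqYm.measurable_mk
  have hkq : qY =ᵐ[unif] k := hqYm.ae_eq_mk
  have hlaw : SameLaw P (fun ω => k (U ω)) Y := by
    have h1 : P.map (k ∘ U) = (P.map U).map k := (Measure.map_map hk hU).symm
    have h2 : unif.map k = unif.map qY := (Measure.map_congr hkq).symm
    exact h1.trans (by rw [hUu, h2, hqY.map_eq hY])
  have hYm : Measurable fun ω => k (U ω) := hk.comp hU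
  have hi := hintg _ hYm hlaw
  have hprodm : AEStronglyMeasurable (fun s => qX s * qY s) (P.map U) := by
    rw [hUu]
    exact (hqXm.mul hqYm).aestronglyMeasurable
  have hae : (fun ω => X ω * k (U ω)) =ᵐ[P] (fun s => qX s * qY s) ∘ U := by
    have hkq' : ∀ᵐ ω ∂P, qY (U ω) = k (U ω) := by
      rw [← hUu] at hkq
      exact ae_of_ae_map hU.aemeasurable hkq
    filter_upwards [hXU, hkq'] with ω h1 h2
    simp only [Function.comp_apply]
    rw [h1, h2]
  have hqint : Integrable (fun s => qX s * qY s) unif := by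
    rw [← hUu]
    exact (integrable_map_measure hprodm hU.aemeasurable).2 (hi.congr hae)
  refine ⟨?_, _, hYm, hlaw, ?_⟩
  · exact hardy_littlewood hXi hYi (hintg Y hY rfl) hqXm hqYm hqint
      (hqX.map_eq hX).symm (hqY.map_eq hY).symm (quantile_nested hX hY hqX hqY)
  · rw [integral_congr_ae hae]
    have := integral_map hU.aemeasurable hprodm
    rw [hUu] at this
    exact this.symm

/-- The support functional of a law-invariant set is law invariant: `E[ZY']` is at most
`∫ q_Z q_Y = E[Z'Y]` for some `Z'` distributed as `Z`. -/
lemma suppFn_le_of_sameLaw (hP : IsAtomless P) (pr : PairedSpaces P) {C : Set (Ω → ℝ)}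
    (hCsub : C ⊆ pr.carrier) (hC : LawInvariantSet P C) {Y Y' : Ω → ℝ} (hY : Y ∈ pr.dual)
    (hY' : Y' ∈ pr.dual) (hYY' : SameLaw P Y' Y) : suppFn P C Y' ≤ suppFn P C Y := by
  refine iSup₂_le fun Z hZ => ?_
  have hZc := hCsub hZ
  have hZm := pr.meas_carrier Z hZc
  have hYm := pr.meas_dual Y hY
  have hY'm := pr.meas_dual Y' hY'
  have hqZ := isQuantile_lowerQ (P := P) hZm
  have hqY' := isQuantile_lowerQ (P := P) hY'm
  have hqY : IsQuantile P Y (lowerQ P Y') := hYY'.isQuantile hY'm hYm hqY'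
  have h1 := (hP.quantile_coupling hZm hY'm (pr.int_carrier Z hZc) (pr.int_dual Y' hY')
    (fun W hW hWl => pr.mul_int Z hZc W (pr.lawinv_dual Y' hY' W hW hWl)) hqZ hqY').1
  obtain ⟨Z', hZ'm, hZ'l, hZ'e⟩ :=
    (hP.quantile_coupling hYm hZm (pr.int_dual Y hY) (pr.int_carrier Z hZc)
      (fun W hW hWl => by
        simpa only [mul_comm] using
          pr.mul_int W (pr.lawinv_carrier Z hZc W hW hWl) Y hY) hqY hqZ).2
  have h2 : ∫ ω, Z ω * Y' ω ∂P ≤ ∫ ω, Z' ω * Y ω ∂P := by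
    refine h1.trans (le_of_eq ?_)
    simp only [mul_comm] at hZ'e ⊢
    exact hZ'e.symm
  calc ((∫ ω, Z ω * Y' ω ∂P : ℝ) : EReal) ≤ ((∫ ω, Z' ω * Y ω ∂P : ℝ) : EReal) := by
        exact_mod_cast h2
    _ ≤ suppFn P C Y :=
        le_iSup₂ (f := fun W (_ : W ∈ C) => ((∫ ω, W ω * Y ω ∂P : ℝ) : EReal)) Z'
          (hC Z hZ Z' hZ'm hZ'l)

end

/-- dual representation of the recession cone of a nonempty convex
`σ(𝒳,𝒳*)`-closed set, and its law-invariant refinement via quantile functions. -/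
theorem recession_cone_dual_representation
    (P : Measure Ω) [IsProbabilityMeasure P] (hP : IsAtomless P)
    (pr : PairedSpaces P) (C : Set (Ω → ℝ)) (hCsub : C ⊆ pr.carrier)
    (hCne : C.Nonempty) (hCconv : ConvexSet C) (hCcl : WeakClosed P pr C) :
    (recCone pr.carrier C =
      {X | X ∈ pr.carrier ∧ ∀ Y ∈ pr.dual,
        (∃ r : ℝ, suppFn P C Y = (r : EReal)) → (∫ ω, X ω * Y ω ∂P) ≤ 0}) ∧
    (LawInvariantSet P C →
      (recCone pr.carrier C =
        {X | X ∈ pr.carrier ∧ ∀ Y ∈ pr.dual,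
          (∃ r : ℝ, suppFn P C Y = (r : EReal)) →
          ∀ qX qY : ℝ → ℝ, IsQuantile P X qX → IsQuantile P Y qY →
            (∫ s in Set.Ioo (0:ℝ) 1, qX s * qY s) ≤ 0}) ∧
      LawInvariantSet P (recCone pr.carrier C)) := by
  have hrec := recCone_eq pr hCsub hCne hCconv hCcl
  refine ⟨hrec, fun hC => ?_⟩
  have hq : recCone pr.carrier C =
        {X | X ∈ pr.carrier ∧ ∀ Y ∈ pr.dual,
          (∃ r : ℝ, suppFn P C Y = (r : EReal)) →
          ∀ qX qY : ℝ → ℝ, IsQuantile P X qX → IsQuantile P Y qY →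
            (∫ s in Set.Ioo (0:ℝ) 1, qX s * qY s) ≤ 0} := by
    rw [hrec]
    ext X
    constructor
    · rintro ⟨hX, h⟩
      refine ⟨hX, fun Y hY ⟨r, hr⟩ qX qY hqX hqY => ?_⟩
      obtain ⟨-, Y', hY'm, hY'l, hY'e⟩ :=
        hP.quantile_coupling (pr.meas_carrier X hX) (pr.meas_dual Y hY) (pr.int_carrier X hX)
          (pr.int_dual Y hY)
          (fun W hW hWl => pr.mul_int X hX W (pr.lawinv_dual Y hY W hW hWl)) hqX hqY
      have hY' := pr.lawinv_dual Y hY Y' hY'm hY'l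
      rw [← hY'e]
      refine h Y' hY' ⟨r, ?_⟩
      rw [← hr]
      exact le_antisymm (suppFn_le_of_sameLaw hP pr hCsub hC hY hY' hY'l)
        (suppFn_le_of_sameLaw hP pr hCsub hC hY' hY (Eq.symm hY'l))
    · rintro ⟨hX, h⟩
      refine ⟨hX, fun Y hY hr => ?_⟩
      have hXm := pr.meas_carrier X hX
      have hYm := pr.meas_dual Y hY
      exact (hP.quantile_coupling hXm hYm (pr.int_carrier X hX) (pr.int_dual Y hY)
        (fun W hW hWl => pr.mul_int X hX W (pr.lawinv_dual Y hY W hW hWl))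
        (isQuantile_lowerQ hXm) (isQuantile_lowerQ hYm)).1.trans
          (h Y hY hr _ _ (isQuantile_lowerQ hXm) (isQuantile_lowerQ hYm))
  refine ⟨hq, ?_⟩
  rw [hq]
  rintro X ⟨hX, h⟩ X' hX'm hX'l
  refine ⟨pr.lawinv_carrier X hX X' hX'm hX'l, fun Y hY hr qX qY hqX hqY => ?_⟩
  exact h Y hY hr qX qY (hX'l.isQuantile hX'm (pr.meas_carrier X hX) hqX) hqY

end Collapse
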